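/- Let p : ℕ → [0,1] be nonincreasing, and suppose there exists n₀ ∈ ℕ such that p_n > 0 if and only if n ≤ n₀. For each β > 0 let q_n(β) = e^{−β} β^n / n!. Then limsup_{β→∞} [Σ_{n,m∈ℕ} q_n(β) q_m(β) p_{max(n,m)}] / (Σ_{n∈ℕ} q_n(β) p_n)² < ∞; in other words, the conditional Monte Carlo estimator (and hence the importance sampling estimator) exhibits bounded relative error as the intensity, equivalently β, tends to infinity while the window and threshold are fixed. -/

import Mathlib

/-- The Poisson(β) probability mass function `q_n = e^{-β} β^n / n!`. -/
noncomputable def poissonPMF (β : ℝ) (n : ℕ) : ℝ := Real.exp (-β) * β ^ n / n.factorial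

theorem poissonPMF_nonneg {β : ℝ} (hβ : 0 ≤ β) (n : ℕ) : 0 ≤ poissonPMF β n := by
  unfold poissonPMF
  positivity

/-- On the support `{n | n ≤ n₀}`, an antitone sequence satisfies
`p (max n m) * p n₀ ≤ p n * p m`. -/
theorem Antitone.apply_max_mul_le {p : ℕ → ℝ} (hmono : Antitone p) {n₀ n m : ℕ}
    (hp : ∀ k ≤ n₀, 0 ≤ p k) (hn : n ≤ n₀) (hm : m ≤ n₀) :
    p (max n m) * p n₀ ≤ p n * p m := by
  rcases le_total n m with h | h
  · rw [max_eq_right h, mul_comm (p n)]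
    exact mul_le_mul_of_nonneg_left (hmono hn) (hp m hm)
  · rw [max_eq_left h]
    exact mul_le_mul_of_nonneg_left (hmono hm) (hp n hn)

/-- Corollary 1: with a fixed window and threshold (so that the nonincreasing
probabilities `p_n` are positive exactly for `n ≤ n₀`), the relative second moment
`E[Ŷ²]/(p*)²` of the conditional Monte Carlo estimator stays bounded as `β → ∞`,
i.e. its limsup is finite: bounded relative error. -/
theorem boundedRelativeError_CMC_fixed_window
    (p : ℕ → ℝ) (hp01 : ∀ n, p n ∈ Set.Icc (0 : ℝ) 1) (hmono : Antitone p)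
    (n₀ : ℕ) (hpos : ∀ n, 0 < p n ↔ n ≤ n₀) :
    Filter.IsBoundedUnder (· ≤ ·) Filter.atTop
      (fun β : ℝ =>
        (∑' n : ℕ, ∑' m : ℕ, poissonPMF β n * poissonPMF β m * p (max n m)) /
          (∑' n : ℕ, poissonPMF β n * p n) ^ 2) := by
  have hzero : ∀ n, n ∉ Finset.range (n₀ + 1) → p n = 0 := fun n hn =>
    le_antisymm (not_lt.1 fun h => hn (by have := (hpos n).1 h; simp; omega)) (hp01 n).1
  have hc : 0 < p n₀ := (hpos n₀).2 le_rfl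
  refine Filter.isBoundedUnder_of_eventually_le (a := 1 / p n₀) ?_
  filter_upwards [Filter.eventually_ge_atTop (0 : ℝ)] with β hβ
  have hinner : ∀ n, ∑' m : ℕ, poissonPMF β n * poissonPMF β m * p (max n m) =
      ∑ m ∈ Finset.range (n₀ + 1), poissonPMF β n * poissonPMF β m * p (max n m) := by
    intro n
    refine tsum_eq_sum fun m hm => ?_
    rw [hzero (max n m) (by simp at hm ⊢; omega), mul_zero]
  have houter : ∑' n : ℕ, ∑' m : ℕ, poissonPMF β n * poissonPMF β m * p (max n m) =
      ∑ n ∈ Finset.range (n₀ + 1), ∑ m ∈ Finset.range (n₀ + 1),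
        poissonPMF β n * poissonPMF β m * p (max n m) := by
    simp_rw [hinner]
    refine tsum_eq_sum fun n hn => Finset.sum_eq_zero fun m _ => ?_
    rw [hzero (max n m) (by simp at hn ⊢; omega), mul_zero]
  have hmean : ∑' n : ℕ, poissonPMF β n * p n =
      ∑ n ∈ Finset.range (n₀ + 1), poissonPMF β n * p n :=
    tsum_eq_sum fun n hn => by rw [hzero n hn, mul_zero]
  rw [houter, hmean]
  refine div_le_of_le_mul₀ (sq_nonneg _) (by positivity) ?_
  rw [one_div_mul_eq_div, le_div_iff₀ hc, sq, Finset.sum_mul_sum, Finset.sum_mul]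
  refine Finset.sum_le_sum fun n hn => ?_
  rw [Finset.sum_mul]
  refine Finset.sum_le_sum fun m hm => ?_
  rw [mul_assoc, mul_mul_mul_comm (poissonPMF β n) (p n)]
  exact mul_le_mul_of_nonneg_left
    (hmono.apply_max_mul_le (fun k _ => (hp01 k).1) (Finset.mem_range_succ_iff.1 hn)
      (Finset.mem_range_succ_iff.1 hm))
    (mul_nonneg (poissonPMF_nonneg hβ n) (poissonPMF_nonneg hβ m))
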